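/- Let G be a (P6, diamond)-free graph containing an induced five-cycle Q = {v1,...,v5}, with the associated sets A_i, B_{i,i+1}, C_{i,i+2} (indices modulo 5). If B_{i,i+1} is nonempty, then C_{i-2,i} is anti-complete to A_i, and C_{i+1,i+3} is anti-complete to A_{i+1}. -/

import Mathlib

/-!
Both halves are one configuration read in the two directions around the cycle. Write `p q r s` for
four consecutive vertices of `Q`, let `b` see exactly `p, q` among them, `a` exactly `p`, and `c`
exactly `p, s`, and suppose `a` and `c` are adjacent. Then `a c p` is a triangle.

* If `b` sees `a`, then the edge `b p` has the common neighbours `a` and `q`, which are not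
  adjacent: a diamond.
* If `b` sees `c` but not `a`, then the edge `c p` has the nonadjacent common neighbours `a` and
  `b`: again a diamond.
* If `b` sees neither, and `a c s r q b` is an induced `P₆`.

The first claim takes `p q r s = vᵢ vᵢ₊₁ vᵢ₊₂ vᵢ₊₃`, the second `vᵢ₊₁ vᵢ vᵢ₊₄ vᵢ₊₃`.
-/

open SimpleGraph

/-- The diamond graph: `K₄` minus an edge. -/
def diamondGraph : SimpleGraph (Fin 4) :=
  SimpleGraph.fromRel (fun a b =>
    (a, b) ∈ [((0 : Fin 4), (1 : Fin 4)), (0, 2), (0, 3), (1, 2), (1, 3)])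

/-- `G` has no induced subgraph isomorphic to `H`. -/
def InducedFree {W V : Type*} (H : SimpleGraph W) (G : SimpleGraph V) : Prop :=
  ¬ Nonempty (H ↪g G)

/-- `G` is (P₆, diamond)-free: it contains no induced subgraph isomorphic to the
path on six vertices or to the diamond. -/
def P6DiamondFree {V : Type*} (G : SimpleGraph V) : Prop :=
  InducedFree (SimpleGraph.pathGraph 6) G ∧ InducedFree diamondGraph G

/-- `v` lists, in cyclic order, the vertices of an induced five-cycle in `G`. -/
def IsInducedC5 {V : Type*} (G : SimpleGraph V) (v : Fin 5 → V) : Prop :=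
  Function.Injective v ∧ ∀ i j, G.Adj (v i) (v j) ↔ (j = i + 1 ∨ i = j + 1)

/-- `A_i`: vertices outside `Q` whose neighbourhood in `Q` is exactly `{v_i}`. -/
def setA {V : Type*} (G : SimpleGraph V) (v : Fin 5 → V) (i : Fin 5) : Set V :=
  {x | x ∉ Set.range v ∧ ∀ j, G.Adj x (v j) ↔ j = i}

/-- `B_{i,i+1}`: vertices outside `Q` whose neighbourhood in `Q` is exactly `{v_i, v_{i+1}}`. -/
def setB {V : Type*} (G : SimpleGraph V) (v : Fin 5 → V) (i : Fin 5) : Set V :=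
  {x | x ∉ Set.range v ∧ ∀ j, G.Adj x (v j) ↔ (j = i ∨ j = i + 1)}

/-- `C_{i,i+2}`: vertices outside `Q` whose neighbourhood in `Q` is exactly `{v_i, v_{i+2}}`. -/
def setC {V : Type*} (G : SimpleGraph V) (v : Fin 5 → V) (i : Fin 5) : Set V :=
  {x | x ∉ Set.range v ∧ ∀ j, G.Adj x (v j) ↔ (j = i ∨ j = i + 2)}

/-- `Z`: vertices outside `Q` with no neighbour in `Q`. -/
def setZ {V : Type*} (G : SimpleGraph V) (v : Fin 5 → V) : Set V :=
  {x | x ∉ Set.range v ∧ ∀ j, ¬ G.Adj x (v j)}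

/-- `X` is anti-complete to `Y`: there are no edges between `X` and `Y`. -/
def Anticomplete {V : Type*} (G : SimpleGraph V) (X Y : Set V) : Prop :=
  ∀ x ∈ X, ∀ y ∈ Y, ¬ G.Adj x y

/-- `X` is complete to `Y`: every vertex of `X` is adjacent to every vertex of `Y`. -/
def CompleteTo {V : Type*} (G : SimpleGraph V) (X Y : Set V) : Prop :=
  ∀ x ∈ X, ∀ y ∈ Y, G.Adj x y

/-- Two common neighbours of the ends of an edge `x y` of a diamond-free graph are adjacent. -/
theorem no_diamond {V : Type*} {G : SimpleGraph V} (h : InducedFree diamondGraph G)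
    {x y z w : V} (xy : G.Adj x y) (xz : G.Adj x z) (xw : G.Adj x w) (yz : G.Adj y z)
    (yw : G.Adj y w) (hne : z ≠ w) : G.Adj z w := by
  by_contra zw
  refine h ⟨⟨⟨![x, y, z, w], ?_⟩, ?_⟩⟩
  · intro i j hij
    have := xy.ne; have := xz.ne; have := xw.ne; have := yz.ne; have := yw.ne
    fin_cases i <;> fin_cases j <;> simp_all
  · intro i j
    change G.Adj (![x, y, z, w] i) (![x, y, z, w] j) ↔ _
    fin_cases i <;> fin_cases j <;>
      simp [diamondGraph, xy, xz, xw, yz, yw, zw, xy.symm, xz.symm, xw.symm, yz.symm, yw.symm,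
        G.adj_comm w z]

/-- No six vertices `f 0, …, f 5` induce the path `P₆` in that order. It suffices to describe the
adjacencies for `i < j`, and distinctness need not be assumed. -/
theorem no_path {V : Type*} {G : SimpleGraph V} (h : InducedFree (SimpleGraph.pathGraph 6) G)
    (f : Fin 6 → V)
    (hf : ∀ i j : Fin 6, i < j → (G.Adj (f i) (f j) ↔ i.val + 1 = j.val)) : False := by
  have key : ∀ i j : Fin 6, G.Adj (f i) (f j) ↔ (i.val + 1 = j.val ∨ j.val + 1 = i.val) := by
    intro i j
    rcases lt_trichotomy i j with hij | rfl | hij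
    · rw [hf i j hij]; omega
    · simp
    · rw [G.adj_comm, hf j i hij]; omega
  -- No two vertices of `P₆` have the same neighbourhood, so adjacency alone forces injectivity.
  have twin : ∀ i j : Fin 6, (∀ k : Fin 6, (i.val + 1 = k.val ∨ k.val + 1 = i.val) ↔
      (j.val + 1 = k.val ∨ k.val + 1 = j.val)) → i = j := by decide
  refine h ⟨⟨⟨f, ?_⟩, ?_⟩⟩
  · intro i j hij
    exact twin i j fun k => by rw [← key, ← key, hij]
  · intro i j
    change G.Adj (f i) (f j) ↔ _
    rw [key, SimpleGraph.pathGraph_adj]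

/-- The configuration common to both claims: `p q r s` is a path with `q`, `s` nonadjacent, and `a`,
`b`, `c` have neighbourhoods `{p}`, `{p, q}`, `{p, s}` on it. Adjacency of `p` to `r` and `s` is
irrelevant, since the induced `P₆` avoids `p`. -/
theorem not_adj_of_config {V : Type*} {G : SimpleGraph V} (hG : P6DiamondFree G)
    {p q r s a b c : V}
    (pq : G.Adj p q) (qr : G.Adj q r) (rs : G.Adj r s) (qs : ¬ G.Adj q s)
    (ap : G.Adj a p) (aq : ¬ G.Adj a q) (ar : ¬ G.Adj a r) (as : ¬ G.Adj a s)
    (bp : G.Adj b p) (bq : G.Adj b q) (br : ¬ G.Adj b r) (bs : ¬ G.Adj b s)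
    (cp : G.Adj c p) (cq : ¬ G.Adj c q) (cr : ¬ G.Adj c r) (cs : G.Adj c s) :
    ¬ G.Adj c a := by
  intro ca
  have hab : a ≠ b := by rintro rfl; exact aq bq
  have haq : a ≠ q := by rintro rfl; exact ar qr
  have ba : ¬ G.Adj b a := fun h =>
    aq (no_diamond hG.2 bp h bq ap.symm pq haq)
  have bc : ¬ G.Adj b c := fun h =>
    ba (no_diamond hG.2 cp ca h.symm ap.symm bp.symm hab).symm
  refine no_path hG.1 ![a, c, s, r, q, b] ?_
  intro i j hij
  fin_cases i <;> fin_cases j <;>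
    first
    | exact absurd hij (by decide)
    | simp [ca.symm, cs, rs.symm, qr.symm, bq.symm, aq, ar, as, cq, cr, G.adj_comm s q, qs,
        G.adj_comm s b, bs, G.adj_comm r b, br, G.adj_comm a b, ba, G.adj_comm c b, bc]

/-- If `B_{i,i+1}` is nonempty, then `C_{i−2,i}` is anti-complete to `A_i` and
`C_{i+1,i+3}` is anti-complete to `A_{i+1}`. (Here `i − 2 = i + 3` modulo 5.) -/
theorem property25 {V : Type*} [Fintype V] (G : SimpleGraph V)
    (hG : P6DiamondFree G) (v : Fin 5 → V) (hv : IsInducedC5 G v) (i : Fin 5)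
    (hB : (setB G v i).Nonempty) :
    Anticomplete G (setC G v (i + 3)) (setA G v i) ∧
      Anticomplete G (setC G v (i + 1)) (setA G v (i + 1)) := by
  obtain ⟨b, -, hb⟩ := hB
  obtain ⟨-, hv⟩ := hv
  constructor
  · rintro c ⟨-, hc⟩ a ⟨-, ha⟩
    apply not_adj_of_config hG (p := v i) (q := v (i + 1)) (r := v (i + 2)) (s := v (i + 3))
      (b := b) <;> simp only [hv, ha, hb, hc] <;> clear * - <;> revert i <;> decide
  · rintro c ⟨-, hc⟩ a ⟨-, ha⟩
    apply not_adj_of_config hG (p := v (i + 1)) (q := v i) (r := v (i + 4)) (s := v (i + 3))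
      (b := b) <;> simp only [hv, ha, hb, hc] <;> clear * - <;> revert i <;> decide
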